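/- The essential spectrum of the partial integral operator T = T₁ + T₂ with degenerate kernels is σ_ess(T₁ + T₂) = {0} ∪ (⋃_{i=1}^n Essran(h_i)) ∪ (⋃_{j=1}^m Essran(p_j)). -/

import Mathlib

open MeasureTheory Complex

noncomputable section

/-- The measure on `ℝ` given by restricting Lebesgue measure to `[a,b]`. -/
abbrev muI (a b : ℝ) : MeasureTheory.Measure ℝ :=
  MeasureTheory.volume.restrict (Set.Icc a b)

/-- The discrete spectrum of a bounded operator: the set of isolated points of the
spectrum which are eigenvalues of finite multiplicity. -/
def discreteSpectrum {E : Type*} [NormedAddCommGroup E] [NormedSpace ℂ E]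
    (T : E →L[ℂ] E) : Set ℂ :=
  {z : ℂ | z ∈ spectrum ℂ T ∧ nhdsWithin z (spectrum ℂ T \ {z}) = ⊥ ∧
    LinearMap.ker (T - z • (1 : E →L[ℂ] E)).toLinearMap ≠ ⊥ ∧
    FiniteDimensional ℂ ↥(LinearMap.ker (T - z • (1 : E →L[ℂ] E)).toLinearMap)}

/-- The essential spectrum of a bounded operator: the complement of the discrete
spectrum in the spectrum. -/
def essentialSpectrum {E : Type*} [NormedAddCommGroup E] [NormedSpace ℂ E]
    (T : E →L[ℂ] E) : Set ℂ :=
  spectrum ℂ T \ discreteSpectrum T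

/-- The essential range of a function `φ` with respect to a measure `μ` on `ℝ`. -/
def Essran (μ : MeasureTheory.Measure ℝ) (φ : ℝ → ℝ) : Set ℝ :=
  {l : ℝ | ∀ ε > 0, 0 < μ {ξ : ℝ | l - ε < φ ξ ∧ φ ξ < l + ε}}

/-!
The products `T₁ T₂` and `T₂ T₁` have finite rank, so modulo operators of finite rank
`(T₁ - z) (T₂ - z)` equals `-z (T₁ + T₂ - z)`. Hence, for `z ≠ 0`, the operator `T₁ + T₂ - z` is
Fredholm if and only if both `T₁ - z` and `T₂ - z` are. On the mutually orthogonal copies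
`φ_k ⊗ L²` of `L²` the operator `T₁` acts as multiplication by `h_k`, and it vanishes on the
orthogonal complement of these copies, so `T₁ - z` is Fredholm if and only if multiplication by
`h_k - z` is for every `k`; the same holds for `T₂`. For a normal operator `A`, the point `z` lies
in the essential spectrum if and only if `A - z` is not Fredholm, and a multiplication operator over
an atomless measure has only essential spectrum, namely the essential range of its symbol. Finally,
`0` is in the essential spectrum because `T₁ + T₂` kills every `u ⊗ v` with `u` orthogonal to all
`φ_k` and `v` orthogonal to all `ψ_j`.
-/

open scoped LinearMap.FiniteRangeSetoid InnerProductSpace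

section Fredholm

open LinearMap.FiniteRangeSetoid

variable {𝕜 E : Type*} [NontriviallyNormedField 𝕜] [NormedAddCommGroup E] [NormedSpace 𝕜 E]
  {A B : E →L[𝕜] E}

lemma one_sub_equiv_id_of_hasFiniteRange (hA : A.toLinearMap.HasFiniteRange) :
    (1 - A).toLinearMap ≈ .id := by
  have hdiff : (1 - A).toLinearMap - .id = -A.toLinearMap := by ext x; simp
  exact equiv_iff_hasFiniteRange.2 (hdiff ▸ hA.neg)

variable [CompleteSpace 𝕜]

lemma isFredholm_congr (hAB : A.toLinearMap ≈ B.toLinearMap) : A.IsFredholm ↔ B.IsFredholm := by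
  simp only [ContinuousLinearMap.isFredholm_iff_exists_isQuasiInverse,
    LinearMap.isQuasiInverse_congr (Setoid.refl _) hAB]

lemma isFredholm_of_left_right_quasiInverse {L R : E →L[𝕜] E}
    (hL : (L * A).toLinearMap ≈ .id) (hR : (A * R).toLinearMap ≈ .id) : A.IsFredholm := by
  simp only [ContinuousLinearMap.toLinearMap_mul, Module.End.mul_eq_comp] at hL hR
  have hLR : L.toLinearMap ≈ R.toLinearMap :=
    calc
      L.toLinearMap ≈ L.toLinearMap ∘ₗ (A.toLinearMap ∘ₗ R.toLinearMap) := by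
        grw [hR, LinearMap.comp_id]
      _ ≈ R.toLinearMap := by
        grw [← LinearMap.comp_assoc, hL, LinearMap.id_comp]
  exact .of_isQuasiInverse (v := L) ⟨hL, Setoid.trans (equiv_comp_left hLR) hR⟩

lemma isFredholm_of_isUnit (hA : IsUnit A) : A.IsFredholm := by
  obtain ⟨⟨A, G, hAG, hGA⟩, rfl⟩ := hA
  refine isFredholm_of_left_right_quasiInverse (L := G) (R := G) ?_ ?_
  · rw [hGA]; exact Setoid.refl _
  · rw [hAG]; exact Setoid.refl _

lemma isFredholm_mul_iff (hAB : (A * B).toLinearMap ≈ (B * A).toLinearMap) :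
    (A * B).IsFredholm ↔ A.IsFredholm ∧ B.IsFredholm := by
  constructor
  · intro h
    obtain ⟨G, hG, hG'⟩ := h.exists_isQuasiInverse
    have hBA : (G * (B * A)).toLinearMap ≈ .id :=
      Setoid.trans (equiv_comp_left (Setoid.symm hAB)) hG
    have hBA' : ((B * A) * G).toLinearMap ≈ .id :=
      Setoid.trans (equiv_comp_right (Setoid.symm hAB)) hG'
    exact ⟨isFredholm_of_left_right_quasiInverse (L := G * B) (R := B * G) hBA hG',
      isFredholm_of_left_right_quasiInverse (L := G * A) (R := A * G) hG hBA'⟩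
  · rintro ⟨hA, hB⟩
    obtain ⟨G, hG⟩ := hA.exists_isQuasiInverse
    obtain ⟨H, hH⟩ := hB.exists_isQuasiInverse
    exact .of_isQuasiInverse (v := H * G) (hH.comp hG)

lemma isFredholm_smul_iff {c : 𝕜} (hc : c ≠ 0) : (c • A).IsFredholm ↔ A.IsFredholm := by
  have hunit : IsUnit (c • (1 : E →L[𝕜] E)) := isUnit_one.smul (Units.mk0 c hc)
  rw [← smul_one_mul c A, isFredholm_mul_iff (by simp), and_iff_right (isFredholm_of_isUnit hunit)]

lemma isFredholm_add_sub_smul_one_iff {S T : E →L[𝕜] E}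
    (hST : (S * T).toLinearMap.HasFiniteRange) (hTS : (T * S).toLinearMap.HasFiniteRange)
    {z : 𝕜} (hz : z ≠ 0) :
    (S + T - z • 1).IsFredholm ↔ (S - z • 1).IsFredholm ∧ (T - z • 1).IsFredholm := by
  have factor {A B : E →L[𝕜] E} (hAB : (A * B).toLinearMap.HasFiniteRange) :
      ((A - z • 1) * (B - z • 1)).toLinearMap ≈ (-z • (A + B - z • 1)).toLinearMap := by
    have hdiff : (A - z • 1) * (B - z • 1) - -z • (A + B - z • 1) = A * B := by
      simp only [sub_mul, mul_sub, smul_mul_assoc, mul_smul_comm, one_mul, mul_one]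
      module
    rwa [equiv_iff_hasFiniteRange, ← ContinuousLinearMap.toLinearMap_sub, hdiff]
  have hcomm : ((S - z • 1) * (T - z • 1)).toLinearMap ≈ ((T - z • 1) * (S - z • 1)).toLinearMap :=
    Setoid.trans (factor hST) (add_comm S T ▸ Setoid.symm (factor hTS))
  rw [← isFredholm_mul_iff hcomm, isFredholm_congr (factor hST),
    isFredholm_smul_iff (neg_ne_zero.2 hz)]

end Fredholm

section Normal

variable {E : Type*} [NormedAddCommGroup E]

lemma continuousOn_of_nhdsWithin_diff_singleton_eq_bot {X Y : Type*} [TopologicalSpace X]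
    [T1Space X] [TopologicalSpace Y] {s : Set X} {x : X}
    (hx : nhdsWithin x (s \ {x}) = ⊥) {f : X → Y}
    (hf : ContinuousOn f {x}ᶜ) : ContinuousOn f s := by
  intro y hy
  obtain rfl | hyx := eq_or_ne y x
  · rw [ContinuousWithinAt, ← Set.insert_sdiff_self_of_mem hy, nhdsWithin_insert, hx, sup_bot_eq]
    exact tendsto_pure_nhds f y
  · exact (hf.continuousAt (isOpen_compl_singleton.mem_nhds hyx)).continuousWithinAt

lemma notMem_spectrum_iff_isUnit_sub_smul_one [NormedSpace ℂ E] {T : E →L[ℂ] E} {z : ℂ} :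
    z ∉ spectrum ℂ T ↔ IsUnit (T - z • 1) := by
  rw [spectrum.notMem_iff, Algebra.algebraMap_eq_smul_one, IsUnit.sub_iff]

lemma isUnit_sub_smul_one_of_mul_eq_zero {𝕜 R : Type*} [Field 𝕜] [Ring R] [Algebra 𝕜 R] {A P : R}
    (hAP : A * P = 0) (hPA : P * A = 0) {c : 𝕜} (hc : c ≠ 0) (h : IsUnit (A + P - c • 1)) :
    IsUnit (A - c • 1) := by
  have hleft : (A - c • 1) * (1 - c⁻¹ • P) = A + P - c • 1 := by
    simp only [sub_mul, mul_sub, mul_one, smul_mul_assoc, mul_smul_comm, one_mul, hAP,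
      smul_zero, inv_smul_smul₀ hc, smul_sub]
    abel
  have hright : (1 - c⁻¹ • P) * (A - c • 1) = A + P - c • 1 := by
    simp only [sub_mul, mul_sub, mul_one, smul_mul_assoc, mul_smul_comm, one_mul, hPA,
      smul_zero, smul_inv_smul₀ hc, smul_sub]
    abel
  have hcomm : Commute (A - c • 1) (1 - c⁻¹ • P) := hleft.trans hright.symm
  exact (hcomm.isUnit_mul_iff.1 (hleft ▸ h)).1

variable [InnerProductSpace ℂ E] [CompleteSpace E]

section

variable {A : E →L[ℂ] E} (hA : IsStarNormal A)
include hA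

lemma starProjection_ker_mul_self_eq_zero : A.ker.starProjection * A = 0 := by
  ext x
  refine (Submodule.starProjection_apply_eq_zero_iff _).2 ?_
  rw [← ContinuousLinearMap.IsStarNormal.orthogonal_range hA]
  exact Submodule.le_orthogonal_orthogonal _ ⟨x, rfl⟩

lemma isUnit_add_starProjection_ker (hF : A.IsFredholm) :
    IsUnit (A + A.ker.starProjection) := by
  have hrange : A.range = A.kerᗮ := by
    rw [← ContinuousLinearMap.IsStarNormal.orthogonal_range hA,
      Submodule.orthogonal_orthogonal_eq_closure,
      hF.isClosed_range.submodule_topologicalClosure_eq]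
  have hAP (x : E) : A (A.ker.starProjection x) = 0 := A.ker.starProjection_apply_mem x
  have hPA (x : E) : A.ker.starProjection (A x) = 0 :=
    congr($(starProjection_ker_mul_self_eq_zero hA) x)
  have hPP (x : E) : A.ker.starProjection (A.ker.starProjection x) = A.ker.starProjection x :=
    Submodule.starProjection_eq_self_iff.2 (A.ker.starProjection_apply_mem x)
  rw [ContinuousLinearMap.isUnit_iff_bijective, Function.Bijective, injective_iff_map_eq_zero]
  constructor
  · intro x hx
    have hPx : A.ker.starProjection x = 0 := by
      simpa [hPA, hPP] using congrArg A.ker.starProjection hx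
    have hAx : x ∈ A.ker := by simpa [hPx] using hx
    rwa [Submodule.starProjection_eq_self_iff.2 hAx] at hPx
  · intro y
    obtain ⟨x, hx⟩ : y - A.ker.starProjection y ∈ A.range :=
      hrange ▸ Submodule.sub_starProjection_mem_orthogonal y
    have hx : A x = y - A.ker.starProjection y := hx
    exact ⟨x - A.ker.starProjection x + A.ker.starProjection y, by simp [hAP, hPP, hx]⟩

end

section

variable {T : E →L[ℂ] E} (hT : IsStarNormal T) {z : ℂ}
include hT

lemma notMem_essentialSpectrum_of_isFredholm (hF : (T - z • 1).IsFredholm) :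
    z ∉ essentialSpectrum T := by
  set A := T - z • (1 : E →L[ℂ] E) with hAdef
  have hA : IsStarNormal A :=
    Commute.isStarNormal_sub (by simpa using (Commute.one_right T).smul_right (star z))
  set P := A.ker.starProjection
  have hAP : A * P = 0 := by ext x; exact A.ker.starProjection_apply_mem x
  have hunit : IsUnit (A + P) := isUnit_add_starProjection_ker hA hF
  have hnear : ∀ᶠ w in nhds z, IsUnit (A + P - (w - z) • 1) := by
    have hlim : Filter.Tendsto (fun w : ℂ => A + P - (w - z) • (1 : E →L[ℂ] E)) (nhds z)
        (nhds (A + P)) := Continuous.tendsto' (by fun_prop) _ _ (by simp)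
    exact hlim.eventually (Units.isOpen.mem_nhds hunit)
  rintro ⟨hs, hd⟩
  refine hd ⟨hs, ?_, ?_, hF.finite_ker⟩
  · rw [← Filter.empty_mem_iff_bot, mem_nhdsWithin_iff_eventually]
    filter_upwards [hnear] with w hw hws
    refine notMem_spectrum_iff_isUnit_sub_smul_one.2 ?_ hws.1
    have := isUnit_sub_smul_one_of_mul_eq_zero hAP (starProjection_ker_mul_self_eq_zero hA)
      (sub_ne_zero.2 hws.2) hw
    rwa [hAdef, sub_sub, ← add_smul, add_sub_cancel] at this
  · intro hbot
    have hP : P = 0 := by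
      ext x; exact (Submodule.eq_bot_iff _).1 hbot _ (A.ker.starProjection_apply_mem x)
    exact notMem_spectrum_iff_isUnit_sub_smul_one.2 (by simpa [hP] using hunit) hs

lemma isFredholm_of_mem_discreteSpectrum (hz : z ∈ discreteSpectrum T) :
    (T - z • 1).IsFredholm := by
  obtain ⟨-, hiso, -, hfin⟩ := hz
  let f : ℂ → ℂ := Pi.single z 1
  let g : ℂ → ℂ := fun w => (w - z)⁻¹
  have hf : ContinuousOn f (spectrum ℂ T) :=
    continuousOn_of_nhdsWithin_diff_singleton_eq_bot hiso
      (continuousOn_const.congr fun w hw => Pi.single_eq_of_ne hw 1)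
  have hg : ContinuousOn g (spectrum ℂ T) :=
    continuousOn_of_nhdsWithin_diff_singleton_eq_bot hiso
      (ContinuousOn.inv₀ (by fun_prop) fun w hw => sub_ne_zero.2 hw)
  have hA : T - z • 1 = cfc (fun w : ℂ => w - z) T := by
    rw [cfc_sub (fun w => w) (fun _ => z) T, cfc_id' ℂ T, cfc_const z T,
      Algebra.algebraMap_eq_smul_one]
  have hGA : cfc g T * (T - z • 1) = 1 - cfc f T := by
    rw [hA, ← cfc_mul g _ T hg, ← cfc_one ℂ T, ← cfc_sub _ _ T (by fun_prop) hf]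
    refine cfc_congr fun w _ => ?_
    obtain rfl | hwz := eq_or_ne w z
    · simp [f]
    · simp [f, g, hwz, sub_ne_zero.2 hwz]
  have hAf : (T - z • 1) * cfc f T = 0 := by
    rw [hA, ← cfc_mul _ f T (by fun_prop) hf, ← cfc_zero ℂ T]
    refine cfc_congr fun w _ => ?_
    obtain rfl | hwz := eq_or_ne w z <;> simp [f, *]
  have hfin : (cfc f T).toLinearMap.HasFiniteRange :=
    have hle : (cfc f T).range ≤ (T - z • 1).ker := by
      rintro _ ⟨x, rfl⟩; exact congr($hAf x)
    Submodule.FG.of_le_of_isNoetherian hle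
  have hAG : (T - z • 1) * cfc g T = 1 - cfc f T :=
    hGA ▸ hA ▸ cfc_commute_cfc (fun w => w - z) g T
  exact isFredholm_of_left_right_quasiInverse (hGA ▸ one_sub_equiv_id_of_hasFiniteRange hfin)
    (hAG ▸ one_sub_equiv_id_of_hasFiniteRange hfin)

lemma notMem_essentialSpectrum_iff_isFredholm :
    z ∉ essentialSpectrum T ↔ (T - z • 1).IsFredholm := by
  refine ⟨fun hz => ?_, notMem_essentialSpectrum_of_isFredholm hT⟩
  by_cases hs : z ∈ spectrum ℂ T
  · exact isFredholm_of_mem_discreteSpectrum hT (by_contra fun hd => hz ⟨hs, hd⟩)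
  · exact isFredholm_of_isUnit (notMem_spectrum_iff_isUnit_sub_smul_one.1 hs)

end

end Normal

section BlockDiagonal

open LinearMap.FiniteRangeSetoid ContinuousLinearMap

variable {𝕜 E F G ι κ : Type*} [RCLike 𝕜] [Fintype ι] [Fintype κ]
  [NormedAddCommGroup E] [InnerProductSpace 𝕜 E] [CompleteSpace E]
  [NormedAddCommGroup F] [InnerProductSpace 𝕜 F] [CompleteSpace F]
  [NormedAddCommGroup G] [InnerProductSpace 𝕜 G] [CompleteSpace G]

/-- The block diagonal operator which, for isometries `J k` with mutually orthogonal ranges, acts as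
`M k` on the `k`-th copy `J k F` of `F` in `E` and as the scalar `c` on the orthogonal complement of
these copies. -/
def blockDiagonal (J : ι → F →L[𝕜] E) (M : ι → F →L[𝕜] F) (c : 𝕜) : E →L[𝕜] E :=
  c • 1 + ∑ k, J k ∘L (M k - c • 1) ∘L adjoint (J k)

variable (J : ι → F →L[𝕜] E) (M N : ι → F →L[𝕜] F) (c d : 𝕜)

lemma blockDiagonal_zero : blockDiagonal J M 0 = ∑ k, J k ∘L M k ∘L adjoint (J k) := by
  simp [blockDiagonal]

lemma blockDiagonal_smul_one : blockDiagonal J (d • 1) d = d • 1 := by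
  simp [blockDiagonal]

lemma blockDiagonal_sub :
    blockDiagonal J M c - blockDiagonal J N d = blockDiagonal J (M - N) (c - d) := by
  have hblock (k : ι) : M k - c • 1 - (N k - d • 1) = M k - N k - (c - d) • 1 := by module
  simp only [blockDiagonal, add_sub_add_comm, ← Finset.sum_sub_distrib, ← comp_sub, ← sub_comp,
    hblock, ← sub_smul, Pi.sub_apply]

lemma blockDiagonal_sub_smul_one :
    blockDiagonal J M c - d • 1 = blockDiagonal J (M - d • 1) (c - d) := by
  rw [← blockDiagonal_sub, blockDiagonal_smul_one]

lemma adjoint_blockDiagonal :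
    adjoint (blockDiagonal J M c) = blockDiagonal J (star M) (star c) := by
  simp only [← star_eq_adjoint, blockDiagonal, star_add, star_sum, star_smul, star_one,
    Pi.star_apply]
  simp only [star_eq_adjoint, adjoint_comp, adjoint_adjoint, comp_assoc, map_sub]
  simp only [← star_eq_adjoint, star_smul, star_one]

variable {M}

lemma isSelfAdjoint_blockDiagonal_zero (hM : ∀ k, IsSelfAdjoint (M k)) :
    IsSelfAdjoint (blockDiagonal J M 0) := by
  rw [isSelfAdjoint_iff', adjoint_blockDiagonal, star_zero, (funext hM : star M = M)]

variable {J}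

lemma hasFiniteRange_blockDiagonal_zero (hM : ∀ k, (M k).toLinearMap.HasFiniteRange) :
    (blockDiagonal J M 0).toLinearMap.HasFiniteRange := by
  rw [blockDiagonal_zero, toLinearMap_sum, ← LinearMap.mem_finiteRange_iff_hasFiniteRange]
  refine Submodule.sum_mem _ fun k _ => LinearMap.mem_finiteRange_iff_hasFiniteRange.2 ?_
  exact ((hM k).comp_right _).comp_left _

lemma hasFiniteRange_blockDiagonal_zero_mul {L : κ → G →L[𝕜] E} (M : ι → F →L[𝕜] F)
    (N : κ → G →L[𝕜] G) (hJL : ∀ k j, (adjoint (J k) ∘L L j).toLinearMap.HasFiniteRange) :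
    (blockDiagonal J M 0 * blockDiagonal L N 0).toLinearMap.HasFiniteRange := by
  simp only [blockDiagonal_zero, Finset.sum_mul_sum, toLinearMap_sum,
    ← LinearMap.mem_finiteRange_iff_hasFiniteRange]
  refine Submodule.sum_mem _ fun k _ => Submodule.sum_mem _ fun j _ => ?_
  exact LinearMap.mem_finiteRange_iff_hasFiniteRange.2
    (((hJL k j).comp_right (N j ∘L adjoint (L j)).toLinearMap).comp_left (J k ∘L M k).toLinearMap)

variable [DecidableEq ι] (hJ : ∀ k l, adjoint (J k) ∘L J l = if k = l then 1 else 0)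
include hJ

lemma blockDiagonal_comp (l : ι) : blockDiagonal J M c ∘L J l = J l ∘L M l := by
  have hblock (k : ι) : (J k ∘L (M k - c • 1) ∘L adjoint (J k)) ∘L J l =
      if k = l then J l ∘L (M l - c • 1) else 0 := by
    rw [comp_assoc, comp_assoc, hJ]
    split_ifs with hkl
    · subst hkl; rfl
    · simp
  simp only [blockDiagonal, add_comp, finsetSum_comp, hblock, Finset.sum_ite_eq',
    Finset.mem_univ, if_true, comp_sub]
  ext x
  simp

lemma blockDiagonal_mul :
    blockDiagonal J M c * blockDiagonal J N d = blockDiagonal J (M * N) (c * d) := by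
  have hblock (k : ι) : blockDiagonal J M c ∘L J k ∘L (N k - d • 1) ∘L adjoint (J k) =
      J k ∘L (M k * N k - d • M k) ∘L adjoint (J k) := by
    rw [← comp_assoc, blockDiagonal_comp c hJ k, comp_assoc, ← comp_assoc (M k)]
    congr 2
    rw [comp_sub, comp_smul]
    rfl
  have hsplit (k : ι) : (M * N) k - (c * d) • 1 = M k * N k - d • M k + d • (M k - c • 1) := by
    rw [Pi.mul_apply]; module
  calc blockDiagonal J M c * blockDiagonal J N d
      = d • blockDiagonal J M c + ∑ k, J k ∘L (M k * N k - d • M k) ∘L adjoint (J k) := by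
        rw [blockDiagonal.eq_def J N, mul_add, mul_smul_one, Finset.mul_sum]
        exact congrArg _ (Finset.sum_congr rfl fun k _ => hblock k)
    _ = blockDiagonal J (M * N) (c * d) := by
        simp only [blockDiagonal, hsplit, add_comp, comp_add, Finset.sum_add_distrib, smul_add,
          Finset.smul_sum, smul_comp, comp_smul, smul_smul, mul_comm d c]
        abel

lemma adjoint_comp_blockDiagonal (l : ι) :
    adjoint (J l) ∘L blockDiagonal J M c = M l ∘L adjoint (J l) := by
  have := congrArg adjoint (blockDiagonal_comp (M := star M) (star c) hJ l)
  rwa [adjoint_comp, adjoint_comp, adjoint_blockDiagonal, star_star, star_star, Pi.star_apply,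
    star_eq_adjoint, adjoint_adjoint] at this

variable {c}

lemma isFredholm_blockDiagonal_iff (hc : c ≠ 0) :
    (blockDiagonal J M c).IsFredholm ↔ ∀ k, (M k).IsFredholm := by
  constructor
  · intro h k
    obtain ⟨G, hG, hG'⟩ := h.exists_isQuasiInverse
    have hJk {X : E →L[𝕜] E} (hX : X.toLinearMap ≈ .id) :
        (adjoint (J k) ∘L X ∘L J k).toLinearMap ≈ .id := by
      have : (adjoint (J k) ∘L J k).toLinearMap = .id := by rw [hJ, if_pos rfl]; rfl
      exact this ▸ equiv_comp_left (u' := (adjoint (J k)).toLinearMap) (equiv_comp_right hX)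
    refine isFredholm_of_left_right_quasiInverse (L := adjoint (J k) ∘L G ∘L J k)
      (R := adjoint (J k) ∘L G ∘L J k) ?_ ?_
    · convert hJk (X := G ∘L blockDiagonal J M c) hG using 2
      rw [comp_assoc, blockDiagonal_comp c hJ]; rfl
    · convert hJk (X := blockDiagonal J M c ∘L G) hG' using 2
      rw [comp_assoc, ← comp_assoc _ (blockDiagonal J M c), adjoint_comp_blockDiagonal c hJ]; rfl
  · intro h
    choose G hG using fun k => (h k).exists_isQuasiInverse
    have hone {N : ι → F →L[𝕜] F} (hN : ∀ k, (N k).toLinearMap ≈ .id) :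
        (blockDiagonal J N 1).toLinearMap ≈ .id := by
      have hdiff : blockDiagonal J N 1 - 1 = blockDiagonal J (N - 1) 0 := by
        simpa using blockDiagonal_sub_smul_one J N 1 1
      have hfin := hasFiniteRange_blockDiagonal_zero (J := J) (M := N - 1)
        fun k => equiv_iff_hasFiniteRange.1 (hN k)
      rw [← hdiff] at hfin
      exact equiv_iff_hasFiniteRange.2 hfin
    refine isFredholm_of_left_right_quasiInverse (L := blockDiagonal J G c⁻¹)
      (R := blockDiagonal J G c⁻¹) ?_ ?_
    · rw [blockDiagonal_mul _ _ _ hJ, inv_mul_cancel₀ hc]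
      exact hone fun k => (hG k).1
    · rw [blockDiagonal_mul _ _ _ hJ, mul_inv_cancel₀ hc]
      exact hone fun k => (hG k).2

lemma isFredholm_blockDiagonal_zero_sub_smul_one_iff {z : 𝕜} (hz : z ≠ 0) :
    (blockDiagonal J M 0 - z • 1).IsFredholm ↔ ∀ k, (M k - z • 1).IsFredholm := by
  rw [blockDiagonal_sub_smul_one, isFredholm_blockDiagonal_iff hJ (sub_ne_zero.2 hz.symm)]
  rfl

end BlockDiagonal

lemma not_finiteDimensional_orthogonal {𝕜 E : Type*} [RCLike 𝕜] [NormedAddCommGroup E]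
    [InnerProductSpace 𝕜 E] (hE : ¬ FiniteDimensional 𝕜 E) (K : Submodule 𝕜 E)
    [FiniteDimensional 𝕜 K] : ¬ FiniteDimensional 𝕜 Kᗮ := by
  intro hfin
  have htop : FiniteDimensional 𝕜 (⊤ : Submodule 𝕜 E) :=
    Submodule.sup_orthogonal_of_hasOrthogonalProjection (K := K) ▸ inferInstance
  exact hE (Module.Finite.equiv Submodule.topEquiv)

lemma eq_bot_of_finiteDimensional_of_mapsTo {K V : Type*} [Field K] [IsAlgClosed K]
    [AddCommGroup V] [Module K V] {S : Module.End K V} (hS : ∀ w, ¬ S.HasEigenvalue w)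
    (W : Submodule K V) [FiniteDimensional K W] (hW : Set.MapsTo S W W) : W = ⊥ := by
  by_contra hbot
  have : Nontrivial W := Submodule.nontrivial_iff_ne_bot.2 hbot
  obtain ⟨w, hw⟩ := Module.End.exists_eigenvalue (S.restrict hW)
  obtain ⟨x, hx⟩ := hw.exists_hasEigenvector
  refine hS w (Module.End.hasEigenvalue_of_hasEigenvector (x := x) ⟨?_, by simpa using hx.2⟩)
  exact Module.End.mem_eigenspace_iff.2 congr($(hx.apply_eq_smul).val)

section Multiplication

open scoped ENNReal

variable {α : Type*} [MeasurableSpace α] {μ : Measure α} {f g : α → ℂ}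

lemma memLp_top_ofReal_of_ae_abs_le {h : α → ℝ}
    (hmeas : Measurable h) (hbdd : ∃ C : ℝ, ∀ᵐ x ∂μ, |h x| ≤ C) :
    MemLp (fun x => (h x : ℂ)) ∞ μ := by
  obtain ⟨C, hC⟩ := hbdd
  exact memLp_top_of_bound (by fun_prop) C (by simpa using hC)

/-- The operator of multiplication by an essentially bounded function `f` on `L²(μ)`. -/
def mulOp (hf : MemLp f ∞ μ) : Lp ℂ 2 μ →L[ℂ] Lp ℂ 2 μ :=
  (ContinuousLinearMap.mul ℂ ℂ).holderL μ ∞ 2 2 (hf.toLp f)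

lemma coeFn_mulOp (hf : MemLp f ∞ μ) (u : Lp ℂ 2 μ) : mulOp hf u =ᵐ[μ] fun x => f x * u x := by
  filter_upwards [(ContinuousLinearMap.mul ℂ ℂ).coeFn_holder (r := 2) (hf.toLp f) u,
    hf.coeFn_toLp] with x hx hfx
  exact hx.trans (by rw [hfx, ContinuousLinearMap.mul_apply'])

lemma coeFn_mulOp_sub_smul_one (hf : MemLp f ∞ μ) (z : ℂ) (u : Lp ℂ 2 μ) :
    (mulOp hf - z • 1) u =ᵐ[μ] fun x => (f x - z) * u x := by
  filter_upwards [coeFn_mulOp hf u, Lp.coeFn_sub (mulOp hf u) (z • u), Lp.coeFn_smul z u]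
    with x hf hsub hsmul
  simp only [sub_apply, smul_apply,
    one_apply_eq_self, hsub, Pi.sub_apply, hf, hsmul, Pi.smul_apply, smul_eq_mul,
    sub_mul]

lemma commute_mulOp (hf : MemLp f ∞ μ) (hg : MemLp g ∞ μ) : Commute (mulOp hf) (mulOp hg) := by
  ext1 u
  refine Lp.ext ?_
  filter_upwards [coeFn_mulOp hf (mulOp hg u), coeFn_mulOp hg (mulOp hf u), coeFn_mulOp hf u,
    coeFn_mulOp hg u] with x h₁ h₂ h₃ h₄
  simp only [mul_apply_eq_comp, h₁, h₂, h₃, h₄]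
  ring

lemma isSelfAdjoint_mulOp_ofReal {h : α → ℝ} (hh : MemLp (fun x => (h x : ℂ)) ∞ μ) :
    IsSelfAdjoint (mulOp hh) := by
  rw [ContinuousLinearMap.isSelfAdjoint_iff_isSymmetric]
  intro u v
  simp only [ContinuousLinearMap.coe_coe, L2.inner_def]
  refine integral_congr_ae ?_
  filter_upwards [coeFn_mulOp hh u, coeFn_mulOp hh v] with x hu hv
  rw [hu, hv]
  simp only [RCLike.inner_apply, map_mul, conj_ofReal]
  ring

lemma isUnit_mulOp_sub_smul_one (hf : MemLp f ∞ μ) {z : ℂ} {ε : ℝ} (hε : 0 < ε)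
    (hz : ∀ᵐ x ∂μ, ε ≤ ‖f x - z‖) : IsUnit (mulOp hf - z • 1) := by
  have hinv : MemLp (fun x => (f x - z)⁻¹) ∞ μ := by
    refine memLp_top_of_bound (hf.1.aemeasurable.sub_const z).inv.aestronglyMeasurable ε⁻¹ ?_
    filter_upwards [hz] with x hx
    rw [norm_inv]
    exact inv_anti₀ hε hx
  have hne : ∀ᵐ x ∂μ, f x - z ≠ 0 := hz.mono fun x hx => norm_pos_iff.1 (hε.trans_le hx)
  refine ⟨⟨mulOp hf - z • 1, mulOp hinv, ?_, ?_⟩, rfl⟩ <;> ext1 u <;> refine Lp.ext ?_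
  · filter_upwards [coeFn_mulOp_sub_smul_one hf z (mulOp hinv u), coeFn_mulOp hinv u, hne]
      with x h₁ h₂ hx
    rw [mul_apply_eq_comp, h₁, h₂, mul_inv_cancel_left₀ hx, one_apply_eq_self]
  · filter_upwards [coeFn_mulOp hinv ((mulOp hf - z • 1) u), coeFn_mulOp_sub_smul_one hf z u, hne]
      with x h₁ h₂ hx
    rw [mul_apply_eq_comp, h₁, h₂, inv_mul_cancel_left₀ hx, one_apply_eq_self]

lemma not_isUnit_mulOp_sub_smul_one [SigmaFinite μ] (hf : MemLp f ∞ μ) {z : ℂ}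
    (hz : ∀ ε > 0, 0 < μ {x | ‖f x - z‖ < ε}) : ¬ IsUnit (mulOp hf - z • 1) := by
  rintro ⟨⟨A, G, -, hGA⟩, rfl : A = _⟩
  set ε : ℝ := (‖G‖ + 1)⁻¹
  have hε : 0 < ε := by positivity
  have hnull : NullMeasurableSet {x | ‖f x - z‖ < ε} μ :=
    nullMeasurableSet_lt (hf.1.aemeasurable.sub_const z).norm aemeasurable_const
  obtain ⟨t, htε, ht, hteq⟩ := hnull.exists_measurable_subset_ae_eq
  obtain ⟨s, hs, hst, hspos, hsfin⟩ :=
    Measure.exists_subset_measure_lt_top ht (measure_congr hteq ▸ hz ε hε)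
  set u : Lp ℂ 2 μ := indicatorConstLp 2 hs hsfin.ne 1
  have hu : 0 < ‖u‖ := by
    rw [norm_pos_iff, ne_eq, ← norm_eq_zero, norm_indicatorConstLp two_ne_zero ENNReal.ofNat_ne_top]
    simp [Real.rpow_eq_zero, measureReal_eq_zero_iff, hspos.ne', hsfin.ne]
  have hAu : ‖(mulOp hf - z • 1) u‖ ≤ ε * ‖u‖ := by
    refine Lp.norm_le_mul_norm_of_ae_le_mul ?_
    filter_upwards [coeFn_mulOp_sub_smul_one hf z u, indicatorConstLp_coeFn (p := 2) (hs := hs)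
      (hμs := hsfin.ne) (c := (1 : ℂ))] with x hx hux
    rw [hx, norm_mul]
    by_cases hxs : x ∈ s
    · exact mul_le_mul_of_nonneg_right (htε (hst hxs)).le (norm_nonneg _)
    · simp [u, hux, hxs]
  have hlt : ‖u‖ < ‖u‖ :=
    calc ‖u‖ = ‖G ((mulOp hf - z • 1) u)‖ := by rw [← mul_apply_eq_comp, hGA, one_apply_eq_self]
      _ ≤ ‖G‖ * (ε * ‖u‖) := G.le_opNorm_of_le hAu
      _ < (‖G‖ + 1) * (ε * ‖u‖) := by gcongr; exact lt_add_one _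
      _ = ‖u‖ := mul_inv_cancel_left₀ (by positivity) _
  exact hlt.false

lemma mem_spectrum_mulOp_iff [SigmaFinite μ] (hf : MemLp f ∞ μ) {z : ℂ} :
    z ∈ spectrum ℂ (mulOp hf) ↔ ∀ ε > 0, 0 < μ {x | ‖f x - z‖ < ε} := by
  constructor
  · contrapose!
    rintro ⟨ε, hε, hμ⟩
    refine notMem_spectrum_iff_isUnit_sub_smul_one.2 (isUnit_mulOp_sub_smul_one hf hε ?_)
    simpa [ae_iff] using hμ
  · intro hμ
    by_contra hz
    exact not_isUnit_mulOp_sub_smul_one hf hμ (notMem_spectrum_iff_isUnit_sub_smul_one.1 hz)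

lemma not_hasEigenvalue_mulOp (hf : MemLp f ∞ μ) {z : ℂ} (hz : ∀ᵐ x ∂μ, f x ≠ z) :
    ¬ Module.End.HasEigenvalue (mulOp hf).toLinearMap z := by
  intro h
  obtain ⟨u, hu⟩ := h.exists_hasEigenvector
  have hu0 : (mulOp hf - z • 1) u = 0 := sub_eq_zero.2 hu.apply_eq_smul
  refine hu.2 (Lp.eq_zero_iff_ae_eq_zero.2 ?_)
  filter_upwards [coeFn_mulOp_sub_smul_one hf z u, Lp.eq_zero_iff_ae_eq_zero.1 hu0, hz]
    with x hx hx0 hxz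
  simpa [sub_ne_zero.2 hxz] using hx.symm.trans hx0

lemma spectrum_mulOp_ofReal {μ : Measure ℝ} [SigmaFinite μ] {h : ℝ → ℝ}
    (hh : MemLp (fun x => (h x : ℂ)) ∞ μ) :
    spectrum ℂ (mulOp hh) = ofReal '' Essran μ h := by
  have mem_iff (r : ℝ) : (r : ℂ) ∈ spectrum ℂ (mulOp hh) ↔ r ∈ Essran μ h := by
    simp only [mem_spectrum_mulOp_iff, ← ofReal_sub, norm_real, Real.norm_eq_abs, ← Real.dist_eq,
      ← Metric.mem_ball, Real.ball_eq_Ioo, Set.mem_Ioo, Essran, Set.mem_ofPred_eq]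
  refine Set.Subset.antisymm (fun z hz => ?_) ?_
  · have hre := (isSelfAdjoint_mulOp_ofReal hh).mem_spectrum_eq_re hz
    exact ⟨z.re, (mem_iff _).1 (hre ▸ hz), hre.symm⟩
  · rintro _ ⟨r, hr, rfl⟩
    exact (mem_iff r).2 hr

section NullSingletonClass

variable {μ : Measure ℝ} {f : ℝ → ℂ}

lemma memLp_top_arctan : MemLp (fun x => (Real.arctan x : ℂ)) ∞ μ := by
  refine memLp_top_of_bound (by fun_prop) (Real.pi / 2) (.of_forall fun x => ?_)
  rw [norm_real, Real.norm_eq_abs, abs_le]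
  exact ⟨(Real.neg_pi_div_two_lt_arctan x).le, (Real.arctan_lt_pi_div_two x).le⟩

variable [NullSingletonClass μ]

lemma not_hasEigenvalue_mulOp_arctan (z : ℂ) :
    ¬ Module.End.HasEigenvalue (mulOp (memLp_top_arctan (μ := μ))).toLinearMap z := by
  refine not_hasEigenvalue_mulOp _ (Set.Countable.ae_notMem (Set.Subsingleton.countable ?_) μ)
  intro x hx y hy
  exact Real.arctan_injective (ofReal_injective (hx.trans hy.symm))

lemma not_finiteDimensional_Lp_two [NeZero μ] [SigmaFinite μ] :
    ¬ FiniteDimensional ℂ (Lp ℂ 2 μ) := by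
  intro hfin
  have hbot := eq_bot_of_finiteDimensional_of_mapsTo (not_hasEigenvalue_mulOp_arctan (μ := μ)) ⊤
    (Set.mapsTo_univ _ _)
  have : Subsingleton (Lp ℂ 2 μ) :=
    (Submodule.subsingleton_iff ℂ).1 (subsingleton_of_bot_eq_top hbot.symm)
  refine not_isUnit_mulOp_sub_smul_one (μ := μ) (f := 0) (z := 0) MemLp.zero (fun ε hε => ?_)
    (isUnit_of_subsingleton _)
  simpa [hε] using Measure.measure_univ_pos.2 (NeZero.ne μ)

/-- No eigenspace of `mulOp hf` is finite-dimensional and nonzero, since it is invariant under the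
commuting operator of multiplication by `arctan`, which has no eigenvalues. -/
lemma discreteSpectrum_mulOp (hf : MemLp f ∞ μ) : discreteSpectrum (mulOp hf) = ∅ := by
  refine Set.eq_empty_of_forall_notMem ?_
  rintro z ⟨-, -, hbot, hfin⟩
  refine hbot (eq_bot_of_finiteDimensional_of_mapsTo not_hasEigenvalue_mulOp_arctan _ ?_)
  intro u hu
  have hcomm : Commute (mulOp hf - z • 1) (mulOp memLp_top_arctan) :=
    (commute_mulOp hf memLp_top_arctan).sub_left ((Commute.one_left _).smul_left z)
  have hu : (mulOp hf - z • 1) u = 0 := hu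
  have h := congr($hcomm.eq u)
  rwa [mul_apply_eq_comp, mul_apply_eq_comp, hu, map_zero] at h

lemma essentialSpectrum_mulOp_ofReal [SigmaFinite μ] {h : ℝ → ℝ}
    (hh : MemLp (fun x => (h x : ℂ)) ∞ μ) :
    essentialSpectrum (mulOp hh) = ofReal '' Essran μ h := by
  rw [essentialSpectrum, discreteSpectrum_mulOp, Set.sdiff_empty, spectrum_mulOp_ofReal]

end NullSingletonClass

end Multiplication

section Tensor

open ContinuousLinearMap Measure
open scoped ENNReal

variable {α β : Type*} [MeasurableSpace α] [MeasurableSpace β] {μ : Measure α} {ν : Measure β}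

lemma memLp_two_mul_prod {u : α → ℂ} {v : β → ℂ} (hu : MemLp u 2 μ) (hv : MemLp v 2 ν) :
    MemLp (fun z : α × β => u z.1 * v z.2) 2 (μ.prod ν) := by
  refine (memLp_two_iff_integrable_sq_norm (hu.1.comp_fst.mul hv.1.comp_snd)).2 ?_
  simpa only [Pi.mul_apply, norm_mul, mul_pow] using
    ((memLp_two_iff_integrable_sq_norm hu.1).1 hu).mul_prod
      ((memLp_two_iff_integrable_sq_norm hv.1).1 hv)

lemma ae_memLp_two_prod_left [SFinite μ] [SFinite ν] {f : α × β → ℂ} (hf : MemLp f 2 (μ.prod ν)) :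
    ∀ᵐ y ∂ν, MemLp (fun x => f (x, y)) 2 μ := by
  filter_upwards [hf.1.prodMk_right, ((memLp_two_iff_integrable_sq_norm hf.1).1 hf).prod_left_ae]
    with y hmeas hint
  exact (memLp_two_iff_integrable_sq_norm hmeas).2 hint

lemma inner_toLp {u v : α → ℂ} (hu : MemLp u 2 μ) (hv : MemLp v 2 μ) :
    ⟪hu.toLp u, hv.toLp v⟫_ℂ = ∫ x, star (u x) * v x ∂μ := by
  refine integral_congr_ae ?_
  filter_upwards [hu.coeFn_toLp, hv.coeFn_toLp] with x hux hvx
  rw [hux, hvx, RCLike.inner_apply']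
  rfl

section

variable [SFinite μ] [SFinite ν]

lemma inner_toLp_mul_prod (u u' : Lp ℂ 2 μ) (v v' : Lp ℂ 2 ν) :
    ⟪(memLp_two_mul_prod (Lp.memLp u) (Lp.memLp v)).toLp,
      (memLp_two_mul_prod (Lp.memLp u') (Lp.memLp v')).toLp⟫_ℂ = ⟪u, u'⟫_ℂ * ⟪v, v'⟫_ℂ := by
  rw [inner_toLp, L2.inner_def, L2.inner_def, ← integral_prod_mul]
  refine integral_congr_ae (.of_forall fun z => ?_)
  simp only [RCLike.inner_apply', star_mul', mul_mul_mul_comm]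
  rfl

lemma norm_toLp_mul_prod (u : Lp ℂ 2 μ) (v : Lp ℂ 2 ν) :
    ‖(memLp_two_mul_prod (Lp.memLp u) (Lp.memLp v)).toLp‖ = ‖u‖ * ‖v‖ := by
  have h := inner_toLp_mul_prod u u v v
  simp only [inner_self_eq_norm_sq_to_K, ← mul_pow] at h
  exact (sq_eq_sq₀ (norm_nonneg _) (by positivity)).1 (by exact_mod_cast h)

/-- The tensor product `u ⊗ v`, that is `(x, y) ↦ u x * v y`, as a bounded bilinear map from
`L²(μ) × L²(ν)` to `L²(μ × ν)`. -/
def lpTensor (μ : Measure α) (ν : Measure β) [SFinite μ] [SFinite ν] :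
    Lp ℂ 2 μ →L[ℂ] Lp ℂ 2 ν →L[ℂ] Lp ℂ 2 (μ.prod ν) :=
  LinearMap.mkContinuous₂
    (LinearMap.mk₂ ℂ (fun u v => (memLp_two_mul_prod (Lp.memLp u) (Lp.memLp v)).toLp)
      (fun u u' v => by
        rw [← MemLp.toLp_add, MemLp.toLp_eq_toLp_iff]
        filter_upwards [quasiMeasurePreserving_fst.ae (Lp.coeFn_add u u')] with z hz
        simp only [hz, Pi.add_apply, add_mul])
      (fun c u v => by
        rw [← MemLp.toLp_const_smul, MemLp.toLp_eq_toLp_iff]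
        filter_upwards [quasiMeasurePreserving_fst.ae (Lp.coeFn_smul c u)] with z hz
        simp only [hz, Pi.smul_apply, smul_mul_assoc])
      (fun u v v' => by
        rw [← MemLp.toLp_add, MemLp.toLp_eq_toLp_iff]
        filter_upwards [quasiMeasurePreserving_snd.ae (Lp.coeFn_add v v')] with z hz
        simp only [hz, Pi.add_apply, mul_add])
      (fun c u v => by
        rw [← MemLp.toLp_const_smul, MemLp.toLp_eq_toLp_iff]
        filter_upwards [quasiMeasurePreserving_snd.ae (Lp.coeFn_smul c v)] with z hz
        simp only [hz, Pi.smul_apply, mul_smul_comm]))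
    1 fun u v => by
      rw [one_mul]
      exact (norm_toLp_mul_prod u v).le

lemma inner_lpTensor (u u' : Lp ℂ 2 μ) (v v' : Lp ℂ 2 ν) :
    ⟪lpTensor μ ν u v, lpTensor μ ν u' v'⟫_ℂ = ⟪u, u'⟫_ℂ * ⟪v, v'⟫_ℂ :=
  inner_toLp_mul_prod u u' v v'

lemma coeFn_lpTensor (u : Lp ℂ 2 μ) (v : Lp ℂ 2 ν) :
    lpTensor μ ν u v =ᵐ[μ.prod ν] fun z => u z.1 * v z.2 :=
  (memLp_two_mul_prod (Lp.memLp u) (Lp.memLp v)).coeFn_toLp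

lemma lpTensor_ne_zero {u : Lp ℂ 2 μ} {v : Lp ℂ 2 ν} (hu : u ≠ 0) (hv : v ≠ 0) :
    lpTensor μ ν u v ≠ 0 :=
  norm_pos_iff.1 <| (mul_pos (norm_pos_iff.2 hu) (norm_pos_iff.2 hv)).trans_eq
    (norm_toLp_mul_prod u v).symm

lemma adjoint_lpTensor_apply (u u' : Lp ℂ 2 μ) (v : Lp ℂ 2 ν) :
    adjoint (lpTensor μ ν u) (lpTensor μ ν u' v) = ⟪u, u'⟫_ℂ • v :=
  ext_inner_left ℂ fun w => by rw [adjoint_inner_right, inner_lpTensor, inner_smul_right]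

lemma adjoint_flip_lpTensor_apply (u : Lp ℂ 2 μ) (v v' : Lp ℂ 2 ν) :
    adjoint ((lpTensor μ ν).flip v) (lpTensor μ ν u v') = ⟪v, v'⟫_ℂ • u :=
  ext_inner_left ℂ fun w => by
    rw [adjoint_inner_right, flip_apply, inner_lpTensor, inner_smul_right, mul_comm]

lemma hasFiniteRange_adjoint_lpTensor_comp_flip (u : Lp ℂ 2 μ) (v : Lp ℂ 2 ν) :
    (adjoint (lpTensor μ ν u) ∘L (lpTensor μ ν).flip v).toLinearMap.HasFiniteRange := by
  have hle : (adjoint (lpTensor μ ν u) ∘L (lpTensor μ ν).flip v).range ≤ ℂ ∙ v := by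
    rintro _ ⟨w, rfl⟩
    exact Submodule.mem_span_singleton.2 ⟨_, (adjoint_lpTensor_apply u w v).symm⟩
  exact Submodule.FG.of_le_of_isNoetherian hle

lemma hasFiniteRange_adjoint_flip_lpTensor_comp (u : Lp ℂ 2 μ) (v : Lp ℂ 2 ν) :
    (adjoint ((lpTensor μ ν).flip v) ∘L lpTensor μ ν u).toLinearMap.HasFiniteRange := by
  have hle : (adjoint ((lpTensor μ ν).flip v) ∘L lpTensor μ ν u).range ≤ ℂ ∙ u := by
    rintro _ ⟨w, rfl⟩
    exact Submodule.mem_span_singleton.2 ⟨_, (adjoint_flip_lpTensor_apply u v w).symm⟩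
  exact Submodule.FG.of_le_of_isNoetherian hle

end

lemma coeFn_adjoint_lpTensor [SFinite μ] [SigmaFinite ν] (u : Lp ℂ 2 μ) (f : Lp ℂ 2 (μ.prod ν)) :
    adjoint (lpTensor μ ν u) f =ᵐ[ν] fun y => ∫ s, star (u s) * f (s, y) ∂μ := by
  have hsection {S : Set β} (hS : MeasurableSet S) (hνS : ν S ≠ ∞) :
      (fun y => ∫ s, ⟪lpTensor μ ν u (indicatorConstLp 2 hS hνS 1) (s, y), f (s, y)⟫_ℂ ∂μ) =ᵐ[ν]
        S.indicator fun y => ∫ s, star (u s) * f (s, y) ∂μ := by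
    have hswap := measurePreserving_swap.quasiMeasurePreserving.ae
      (coeFn_lpTensor u (indicatorConstLp 2 hS hνS 1))
    filter_upwards [ae_ae_of_ae_prod hswap, indicatorConstLp_coeFn (p := 2) (hs := hS)
      (hμs := hνS) (c := (1 : ℂ))] with y hy hyS
    by_cases hyS' : y ∈ S
    · rw [Set.indicator_of_mem hyS']
      refine integral_congr_ae (hy.mono fun s hs => ?_)
      have hs : lpTensor μ ν u (indicatorConstLp 2 hS hνS 1) (s, y) = u s := by
        simpa [hyS, hyS'] using hs
      simp only [hs, RCLike.inner_apply']
      rfl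
    · rw [Set.indicator_of_notMem hyS']
      refine integral_eq_zero_of_ae (hy.mono fun s hs => ?_)
      have hs : lpTensor μ ν u (indicatorConstLp 2 hS hνS 1) (s, y) = 0 := by
        simpa [hyS, hyS'] using hs
      simp only [hs, inner_zero_left, Pi.zero_apply]
  refine ae_eq_of_forall_setIntegral_eq_of_sigmaFinite
    (fun S _ hνS => integrableOn_Lp_of_measure_ne_top _ one_le_two hνS.ne)
    (fun S hS hνS => ?_) fun S hS hνS => ?_
  · rw [← integrable_indicator_iff hS, ← integrable_congr (hsection hS hνS.ne)]
    exact (L2.integrable_inner (𝕜 := ℂ) (lpTensor μ ν u _) f).integral_prod_right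
  · rw [← L2.inner_indicatorConstLp_one hS hνS.ne, adjoint_inner_right, L2.inner_def,
      integral_prod_symm _ (L2.integrable_inner _ _), integral_congr_ae (hsection hS hνS.ne),
      integral_indicator hS]

end Tensor

section PartialIntegral

open ContinuousLinearMap
open scoped ENNReal

variable {α β ι : Type*} [MeasurableSpace α] [MeasurableSpace β] {μ : Measure α} {ν : Measure β}

lemma coeFn_lpTensor_mulOp_adjoint_lpTensor [SFinite μ] [SigmaFinite ν] {u : α → ℂ} {g : β → ℂ}
    (hu : MemLp u 2 μ) (hg : MemLp g ∞ ν) (f : Lp ℂ 2 (μ.prod ν)) :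
    lpTensor μ ν hu.toLp (mulOp hg (adjoint (lpTensor μ ν hu.toLp) f)) =ᵐ[μ.prod ν]
      fun z => ∫ s, u z.1 * star (u s) * g z.2 * f (s, z.2) ∂μ := by
  filter_upwards [coeFn_lpTensor hu.toLp (mulOp hg (adjoint (lpTensor μ ν hu.toLp) f)),
    Measure.quasiMeasurePreserving_fst.ae hu.coeFn_toLp,
    Measure.quasiMeasurePreserving_snd.ae (coeFn_mulOp hg (adjoint (lpTensor μ ν hu.toLp) f)),
    Measure.quasiMeasurePreserving_snd.ae (coeFn_adjoint_lpTensor hu.toLp f)]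
    with z htensor hz hmul hadj
  rw [htensor, hz, hmul, hadj, ← integral_const_mul, ← integral_const_mul]
  refine integral_congr_ae (hu.coeFn_toLp.mono fun s hs => ?_)
  simp only [hs]
  ring

variable [Fintype ι]

lemma coeFn_blockDiagonal_lpTensor [SFinite μ] [SigmaFinite ν] {φ : ι → α → ℂ}
    {g : ι → β → ℂ} (hφ : ∀ k, MemLp (φ k) 2 μ) (hg : ∀ k, MemLp (g k) ∞ ν)
    (f : Lp ℂ 2 (μ.prod ν)) :
    blockDiagonal (fun k => lpTensor μ ν (hφ k).toLp) (fun k => mulOp (hg k)) 0 f =ᵐ[μ.prod ν]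
      fun z => ∫ s, (∑ k, φ k z.1 * star (φ k s) * g k z.2) * f (s, z.2) ∂μ := by
  have hblock : blockDiagonal (fun k => lpTensor μ ν (hφ k).toLp) (fun k => mulOp (hg k)) 0 f =
      ∑ k, lpTensor μ ν (hφ k).toLp (mulOp (hg k) (adjoint (lpTensor μ ν (hφ k).toLp) f)) := by
    simp only [blockDiagonal_zero, sum_apply, comp_apply]
  rw [hblock]
  filter_upwards [Lp.coeFn_finsetSum (p := 2) Finset.univ fun k =>
      lpTensor μ ν (hφ k).toLp (mulOp (hg k) (adjoint (lpTensor μ ν (hφ k).toLp) f)),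
    ae_all_iff.2 fun k => coeFn_lpTensor_mulOp_adjoint_lpTensor (hφ k) (hg k) f,
    Measure.quasiMeasurePreserving_snd.ae (ae_memLp_two_prod_left (Lp.memLp f))]
    with z hsum hterm hf
  have hint (k : ι) : Integrable (fun s => φ k z.1 * star (φ k s) * g k z.2 * f (s, z.2)) μ := by
    have := ((hφ k).star.integrable_mul hf).const_mul (φ k z.1 * g k z.2)
    refine this.congr (.of_forall fun s => ?_)
    simp only [Pi.mul_apply, Pi.star_apply]
    ring
  simp only [hsum, Finset.sum_apply, hterm, Finset.sum_mul]
  exact (integral_finsetSum _ fun k _ => hint k).symm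

/-- The isometry `f ↦ f ∘ Prod.swap` from `L²(μ × ν)` to `L²(ν × μ)`. -/
def lpSwap (μ : Measure α) (ν : Measure β) [SFinite μ] [SFinite ν] :
    Lp ℂ 2 (μ.prod ν) →ₗᵢ[ℂ] Lp ℂ 2 (ν.prod μ) :=
  Lp.compMeasurePreservingₗᵢ ℂ Prod.swap Measure.measurePreserving_swap

section

variable [SFinite μ] [SFinite ν]

lemma coeFn_lpSwap (f : Lp ℂ 2 (μ.prod ν)) : lpSwap μ ν f =ᵐ[ν.prod μ] fun z => f z.swap :=
  Lp.coeFn_compMeasurePreserving f Measure.measurePreserving_swap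

lemma lpSwap_lpTensor (u : Lp ℂ 2 μ) (v : Lp ℂ 2 ν) :
    lpSwap μ ν (lpTensor μ ν u v) = lpTensor ν μ v u := by
  refine Lp.ext ?_
  filter_upwards [coeFn_lpSwap (lpTensor μ ν u v), coeFn_lpTensor v u,
    Measure.measurePreserving_swap.quasiMeasurePreserving.ae (coeFn_lpTensor u v)] with z hz hvu huv
  rw [hz, huv, hvu]
  exact mul_comm _ _

lemma adjoint_lpTensor_lpSwap (v : Lp ℂ 2 ν) (f : Lp ℂ 2 (μ.prod ν)) :
    adjoint (lpTensor ν μ v) (lpSwap μ ν f) = adjoint ((lpTensor μ ν).flip v) f :=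
  ext_inner_left ℂ fun w => by
    rw [adjoint_inner_right, adjoint_inner_right, ← lpSwap_lpTensor, LinearIsometry.inner_map_map,
      flip_apply]

lemma lpSwap_blockDiagonal_flip_lpTensor (v : ι → Lp ℂ 2 ν) (M : ι → Lp ℂ 2 μ →L[ℂ] Lp ℂ 2 μ)
    (f : Lp ℂ 2 (μ.prod ν)) :
    lpSwap μ ν (blockDiagonal (fun j => (lpTensor μ ν).flip (v j)) M 0 f) =
      blockDiagonal (fun j => lpTensor ν μ (v j)) M 0 (lpSwap μ ν f) := by
  simp only [blockDiagonal_zero, sum_apply, comp_apply, map_sum, flip_apply,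
    lpSwap_lpTensor, adjoint_lpTensor_lpSwap]

end

lemma coeFn_blockDiagonal_flip_lpTensor [SigmaFinite μ] [SFinite ν] {ψ : ι → β → ℂ}
    {g : ι → α → ℂ} (hψ : ∀ j, MemLp (ψ j) 2 ν) (hg : ∀ j, MemLp (g j) ∞ μ)
    (f : Lp ℂ 2 (μ.prod ν)) :
    blockDiagonal (fun j => (lpTensor μ ν).flip (hψ j).toLp) (fun j => mulOp (hg j)) 0 f
      =ᵐ[μ.prod ν] fun z => ∫ t, (∑ j, g j z.1 * ψ j z.2 * star (ψ j t)) * f (z.1, t) ∂ν := by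
  set B := blockDiagonal (fun j => (lpTensor μ ν).flip (hψ j).toLp) (fun j => mulOp (hg j)) 0
  have hswap : Measure.QuasiMeasurePreserving Prod.swap (μ.prod ν) (ν.prod μ) :=
    Measure.measurePreserving_swap.quasiMeasurePreserving
  have hformula := coeFn_blockDiagonal_lpTensor hψ hg (lpSwap μ ν f)
  rw [← lpSwap_blockDiagonal_flip_lpTensor] at hformula
  filter_upwards [hswap.ae hformula, hswap.ae (coeFn_lpSwap (B f)),
    Measure.quasiMeasurePreserving_fst.ae (Measure.ae_ae_of_ae_prod (hswap.ae (coeFn_lpSwap f)))]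
    with z hz hBz hfz
  rw [← z.swap_swap, ← hBz, hz]
  refine integral_congr_ae (hfz.mono fun t ht => ?_)
  have hsum : ∑ j, ψ j z.2 * star (ψ j t) * g j z.1 = ∑ j, g j z.1 * ψ j z.2 * star (ψ j t) :=
    Finset.sum_congr rfl fun j _ => (mul_rotate _ _ _).symm
  exact congrArg₂ (· * ·) hsum ht

end PartialIntegral

section TensorBlocks

open ContinuousLinearMap

variable {α β ι κ : Type*} [MeasurableSpace α] [MeasurableSpace β] {μ : Measure α} {ν : Measure β}

lemma orthonormal_toLp [DecidableEq ι] {φ : ι → α → ℂ} (hφ : ∀ k, MemLp (φ k) 2 μ)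
    (hON : ∀ k l, ∫ x, star (φ k x) * φ l x ∂μ = if k = l then 1 else 0) :
    Orthonormal ℂ fun k => (hφ k).toLp := by
  simpa only [orthonormal_iff_ite, inner_toLp] using hON

variable [SFinite μ] [SFinite ν] {u : ι → Lp ℂ 2 μ} {v : κ → Lp ℂ 2 ν}

lemma adjoint_lpTensor_comp_lpTensor [DecidableEq ι] (hu : Orthonormal ℂ u) (k l : ι) :
    adjoint (lpTensor μ ν (u k)) ∘L lpTensor μ ν (u l) = if k = l then 1 else 0 := by
  ext1 w
  rw [comp_apply, adjoint_lpTensor_apply, orthonormal_iff_ite.1 hu]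
  split_ifs <;> simp

lemma adjoint_flip_lpTensor_comp_flip_lpTensor [DecidableEq κ] (hv : Orthonormal ℂ v) (i j : κ) :
    adjoint ((lpTensor μ ν).flip (v i)) ∘L (lpTensor μ ν).flip (v j) = if i = j then 1 else 0 := by
  ext1 w
  rw [comp_apply, flip_apply, adjoint_flip_lpTensor_apply, orthonormal_iff_ite.1 hv]
  split_ifs <;> simp

variable [Fintype ι] [Fintype κ] (M : ι → Lp ℂ 2 ν →L[ℂ] Lp ℂ 2 ν) (N : κ → Lp ℂ 2 μ →L[ℂ] Lp ℂ 2 μ)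

lemma blockDiagonal_lpTensor_apply_eq_zero {x : Lp ℂ 2 μ}
    (hx : x ∈ (Submodule.span ℂ (Set.range u))ᗮ) (y : Lp ℂ 2 ν) :
    blockDiagonal (fun k => lpTensor μ ν (u k)) M 0 (lpTensor μ ν x y) = 0 := by
  have hux (k : ι) : ⟪u k, x⟫_ℂ = 0 := hx _ (Submodule.subset_span ⟨k, rfl⟩)
  simp [blockDiagonal_zero, adjoint_lpTensor_apply, hux]

lemma blockDiagonal_flip_lpTensor_apply_eq_zero (x : Lp ℂ 2 μ) {y : Lp ℂ 2 ν}
    (hy : y ∈ (Submodule.span ℂ (Set.range v))ᗮ) :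
    blockDiagonal (fun j => (lpTensor μ ν).flip (v j)) N 0 (lpTensor μ ν x y) = 0 := by
  have hvy (j : κ) : ⟪v j, y⟫_ℂ = 0 := hy _ (Submodule.subset_span ⟨j, rfl⟩)
  simp [blockDiagonal_zero, adjoint_flip_lpTensor_apply, hvy]

lemma not_isFredholm_blockDiagonal_add_blockDiagonal (hμ : ¬ FiniteDimensional ℂ (Lp ℂ 2 μ))
    (hν : ¬ FiniteDimensional ℂ (Lp ℂ 2 ν)) :
    ¬ (blockDiagonal (fun k => lpTensor μ ν (u k)) M 0 +
      blockDiagonal (fun j => (lpTensor μ ν).flip (v j)) N 0).IsFredholm := by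
  intro hF
  set U := Submodule.span ℂ (Set.range u)
  set V := Submodule.span ℂ (Set.range v)
  have : FiniteDimensional ℂ U := FiniteDimensional.span_of_finite ℂ (Set.finite_range u)
  have : FiniteDimensional ℂ V := FiniteDimensional.span_of_finite ℂ (Set.finite_range v)
  have hV : Vᗮ ≠ ⊥ := fun hbot =>
    not_finiteDimensional_orthogonal hν V (hbot ▸ inferInstance)
  obtain ⟨y, hy, hy0⟩ := Submodule.exists_mem_ne_zero_of_ne_bot hV
  let tensorRight : Uᗮ →ₗ[ℂ] Lp ℂ 2 (μ.prod ν) := ((lpTensor μ ν).flip y).toLinearMap ∘ₗ Uᗮ.subtype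
  have hker (x : Uᗮ) : tensorRight x ∈ (blockDiagonal (fun k => lpTensor μ ν (u k)) M 0 +
      blockDiagonal (fun j => (lpTensor μ ν).flip (v j)) N 0).ker := by
    have h₁ := blockDiagonal_lpTensor_apply_eq_zero M x.2 y
    have h₂ := blockDiagonal_flip_lpTensor_apply_eq_zero N x.1 hy
    exact (congrArg₂ (· + ·) h₁ h₂).trans (add_zero 0)
  have hinj : Function.Injective (tensorRight.codRestrict _ hker) := by
    rw [injective_iff_map_eq_zero]
    intro x hx
    by_contra hx0
    exact lpTensor_ne_zero (Subtype.coe_ne_coe.2 hx0) hy0 congr(($hx).val)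
  have := hF.finite_ker
  exact not_finiteDimensional_orthogonal hμ U (FiniteDimensional.of_injective _ hinj)

theorem essentialSpectrum_blockDiagonal_add_blockDiagonal
    (hμ : ¬ FiniteDimensional ℂ (Lp ℂ 2 μ)) (hν : ¬ FiniteDimensional ℂ (Lp ℂ 2 ν))
    (hu : Orthonormal ℂ u) (hv : Orthonormal ℂ v) (hM : ∀ k, IsSelfAdjoint (M k))
    (hN : ∀ j, IsSelfAdjoint (N j)) :
    essentialSpectrum (blockDiagonal (fun k => lpTensor μ ν (u k)) M 0 +
        blockDiagonal (fun j => (lpTensor μ ν).flip (v j)) N 0) =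
      {0} ∪ (⋃ k, essentialSpectrum (M k)) ∪ ⋃ j, essentialSpectrum (N j) := by
  classical
  have hsa := (isSelfAdjoint_blockDiagonal_zero (fun k => lpTensor μ ν (u k)) hM).add
    (isSelfAdjoint_blockDiagonal_zero (fun j => (lpTensor μ ν).flip (v j)) hN)
  ext z
  rw [← not_iff_not, notMem_essentialSpectrum_iff_isFredholm hsa.isStarNormal]
  obtain rfl | hz := eq_or_ne z 0
  · simpa using not_isFredholm_blockDiagonal_add_blockDiagonal M N hμ hν
  · rw [isFredholm_add_sub_smul_one_iff
        (hasFiniteRange_blockDiagonal_zero_mul M N fun k j =>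
          hasFiniteRange_adjoint_lpTensor_comp_flip (u k) (v j))
        (hasFiniteRange_blockDiagonal_zero_mul N M fun j k =>
          hasFiniteRange_adjoint_flip_lpTensor_comp (u k) (v j)) hz,
      isFredholm_blockDiagonal_zero_sub_smul_one_iff (adjoint_lpTensor_comp_lpTensor hu) hz,
      isFredholm_blockDiagonal_zero_sub_smul_one_iff
        (adjoint_flip_lpTensor_comp_flip_lpTensor hv) hz]
    simp only [← notMem_essentialSpectrum_iff_isFredholm (hM _).isStarNormal,
      ← notMem_essentialSpectrum_iff_isFredholm (hN _).isStarNormal]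
    simp [hz]

end TensorBlocks

lemma muI_ne_zero {a b : ℝ} (hab : a < b) : muI a b ≠ 0 := by
  simpa [Measure.restrict_eq_zero] using hab

open scoped ENNReal in
theorem statement19_general {ι κ : Type*} [Fintype ι] [Fintype κ] [DecidableEq ι] [DecidableEq κ]
    {μ ν : Measure ℝ} [SigmaFinite μ] [NullSingletonClass μ] [NeZero μ]
    [SigmaFinite ν] [NullSingletonClass ν] [NeZero ν]
    {φ : ι → ℝ → ℂ} (hφ : ∀ k, MemLp (φ k) 2 μ)
    (hφON : ∀ k l, ∫ x, star (φ k x) * φ l x ∂μ = if k = l then 1 else 0)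
    {h : ι → ℝ → ℝ} (hh : ∀ k, MemLp (fun y => (h k y : ℂ)) ∞ ν)
    {ψ : κ → ℝ → ℂ} (hψ : ∀ j, MemLp (ψ j) 2 ν)
    (hψON : ∀ i j, ∫ y, star (ψ i y) * ψ j y ∂ν = if i = j then 1 else 0)
    {p : κ → ℝ → ℝ} (hp : ∀ j, MemLp (fun x => (p j x : ℂ)) ∞ μ)
    {T₁ T₂ : Lp ℂ 2 (μ.prod ν) →L[ℂ] Lp ℂ 2 (μ.prod ν)}
    (hT₁ : ∀ f, ∀ᵐ z ∂(μ.prod ν),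
      T₁ f z = ∫ s, (∑ k, φ k z.1 * star (φ k s) * (h k z.2 : ℂ)) * f (s, z.2) ∂μ)
    (hT₂ : ∀ f, ∀ᵐ z ∂(μ.prod ν),
      T₂ f z = ∫ t, (∑ j, (p j z.1 : ℂ) * ψ j z.2 * star (ψ j t)) * f (z.1, t) ∂ν) :
    essentialSpectrum (T₁ + T₂) =
      {0} ∪ (⋃ k, (fun r : ℝ => (r : ℂ)) '' Essran ν (h k)) ∪
        ⋃ j, (fun r : ℝ => (r : ℂ)) '' Essran μ (p j) := by
  have hT₁' : T₁ = blockDiagonal (fun k => lpTensor μ ν (hφ k).toLp) (fun k => mulOp (hh k)) 0 :=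
    ContinuousLinearMap.ext fun f =>
      Lp.ext (Filter.EventuallyEq.trans (hT₁ f) (coeFn_blockDiagonal_lpTensor hφ hh f).symm)
  have hT₂' : T₂ =
      blockDiagonal (fun j => (lpTensor μ ν).flip (hψ j).toLp) (fun j => mulOp (hp j)) 0 :=
    ContinuousLinearMap.ext fun f =>
      Lp.ext (Filter.EventuallyEq.trans (hT₂ f) (coeFn_blockDiagonal_flip_lpTensor hψ hp f).symm)
  rw [hT₁', hT₂', essentialSpectrum_blockDiagonal_add_blockDiagonal _ _
    not_finiteDimensional_Lp_two not_finiteDimensional_Lp_two (orthonormal_toLp hφ hφON)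
    (orthonormal_toLp hψ hψON) (fun k => isSelfAdjoint_mulOp_ofReal (hh k))
    (fun j => isSelfAdjoint_mulOp_ofReal (hp j))]
  simp only [essentialSpectrum_mulOp_ofReal]

theorem statement19
    (a b c d : ℝ) (hab : a < b) (hcd : c < d)
    (n : ℕ) (hn : 1 ≤ n)
    (φ : Fin n → ℝ → ℂ)
    (hφL2 : ∀ k, MemLp (φ k) 2 (muI a b))
    (hφON : ∀ i j, ∫ x, star (φ i x) * φ j x ∂(muI a b) = if i = j then 1 else 0)
    (h : Fin n → ℝ → ℝ)
    (hhmeas : ∀ k, Measurable (h k))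
    (hhbdd : ∀ k, ∃ C : ℝ, ∀ᵐ y ∂(muI c d), |h k y| ≤ C)
    (m : ℕ) (hm : 1 ≤ m)
    (ψ : Fin m → ℝ → ℂ)
    (hψL2 : ∀ j, MemLp (ψ j) 2 (muI c d))
    (hψON : ∀ i j, ∫ y, star (ψ i y) * ψ j y ∂(muI c d) = if i = j then 1 else 0)
    (p : Fin m → ℝ → ℝ)
    (hpmeas : ∀ j, Measurable (p j))
    (hpbdd : ∀ j, ∃ C : ℝ, ∀ᵐ x ∂(muI a b), |p j x| ≤ C)
    (T1 T2 : Lp ℂ 2 ((muI a b).prod (muI c d)) →L[ℂ] Lp ℂ 2 ((muI a b).prod (muI c d)))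
    (hT1sa : IsSelfAdjoint T1) (hT2sa : IsSelfAdjoint T2)
    (hT1 : ∀ f : Lp ℂ 2 ((muI a b).prod (muI c d)),
      ∀ᵐ z ∂((muI a b).prod (muI c d)),
        T1 f z = ∫ s, (∑ k, φ k z.1 * star (φ k s) * (h k z.2 : ℂ)) * f (s, z.2) ∂(muI a b))
    (hT2 : ∀ f : Lp ℂ 2 ((muI a b).prod (muI c d)),
      ∀ᵐ z ∂((muI a b).prod (muI c d)),
        T2 f z = ∫ t, (∑ j, (p j z.1 : ℂ) * ψ j z.2 * star (ψ j t)) * f (z.1, t) ∂(muI c d))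
    :
    essentialSpectrum (T1 + T2) =
      {0} ∪ (⋃ i : Fin n, (fun r : ℝ => (r : ℂ)) '' Essran (muI c d) (h i)) ∪
        (⋃ j : Fin m, (fun r : ℝ => (r : ℂ)) '' Essran (muI a b) (p j)) := by
  have : NeZero (muI a b) := ⟨muI_ne_zero hab⟩
  have : NeZero (muI c d) := ⟨muI_ne_zero hcd⟩
  exact statement19_general hφL2 hφON
    (fun k => memLp_top_ofReal_of_ae_abs_le (hhmeas k) (hhbdd k)) hψL2 hψON
    (fun j => memLp_top_ofReal_of_ae_abs_le (hpmeas j) (hpbdd j)) hT1 hT2
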